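/- Fix a prime power q and ε ∈ (0,1/2). There exist constants c, C > 0 (depending only on q and ε) and an integer N such that for all integers n ≥ N and all integers m with (1+ε)·(log n)/(log q) ≤ m ≤ (2−ε)·(log n)/(log q), one has c·n²/(m·q^{m}) ≤ log G_q(x_q) ≤ C·n²/(m·q^{m}). -/

import Mathlib

open Real

noncomputable section

/-- Predicate characterizing the Dickman function `ρ : [0,∞) → (0,∞)`:
continuous on `[0,∞)`, positive, equal to `1` on `[0,1]`, and satisfying the
delay differential equation `t·ρ'(t) + ρ(t-1) = 0` for `t > 1`. -/
def IsDickman (ρ : ℝ → ℝ) : Prop :=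
  ContinuousOn ρ (Set.Ici 0) ∧
  (∀ t : ℝ, 0 ≤ t → 0 < ρ t) ∧
  (∀ t ∈ Set.Icc (0:ℝ) 1, ρ t = 1) ∧
  (∀ t : ℝ, 1 < t → HasDerivAt ρ (-(ρ (t - 1)) / t) t)

/-- `ξ(u)`: for `u > 1`, the unique positive solution of `e^ξ = 1 + u·ξ`; otherwise `0`. -/
def xi (u : ℝ) : ℝ :=
  open Classical in
  if h : ∃ x : ℝ, 0 < x ∧ Real.exp x = 1 + u * x then h.choose else 0

/-- `p_{n,m}`: probability that a uniformly random permutation of `{1,…,n}` is `m`-friable,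
i.e. has no cycle of length greater than `m`. -/
def permProb (n m : ℕ) : ℝ :=
  (Nat.card {σ : Equiv.Perm (Fin n) // ∀ c ∈ σ.cycleType, c ≤ m} : ℝ) /
    (Nat.factorial n : ℝ)

/-- `p_{n,m,q}`: proportion of monic polynomials of degree `n` over a finite field `F`
(of cardinality `q`) that are `m`-friable, i.e. all of whose monic irreducible factors
have degree at most `m`. -/
def polyProb (F : Type) [Field F] [Fintype F] (n m : ℕ) : ℝ :=
  (Nat.card {f : Polynomial F // f.Monic ∧ f.natDegree = n ∧
      ∀ p : Polynomial F, p.Monic → Irreducible p → p ∣ f → p.natDegree ≤ m} : ℝ) /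
    (Fintype.card F : ℝ) ^ n

/-- `F_q(z) = ∏_{deg P ≤ m} (1 - (z/q)^{deg P})⁻¹`, the product over monic irreducible
polynomials `P` over `F` of degree at most `m`. -/
def FqFun (F : Type) [Field F] [Fintype F] (m : ℕ) (z : ℝ) : ℝ :=
  ∏ᶠ p ∈ {p : Polynomial F | p.Monic ∧ Irreducible p ∧ p.natDegree ≤ m},
    (1 - (z / (Fintype.card F : ℝ)) ^ p.natDegree)⁻¹

/-- `G_q(z) = F_q(z) · exp(-∑_{i=1}^m z^i/i)`. -/
def Gq (F : Type) [Field F] [Fintype F] (m : ℕ) (z : ℝ) : ℝ :=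
  FqFun F m z * Real.exp (-(∑ i ∈ Finset.Icc 1 m, z ^ i / (i : ℝ)))

/-- The coefficients `d_{m,i}`. -/
def dcoef (m i : ℕ) : ℝ :=
  if i = m then -(1 / (m : ℝ)) * ∑ j ∈ Finset.Icc 2 m, (1 : ℝ) / (j : ℝ)
  else Real.Gamma ((i : ℝ) + (i : ℝ) / (m : ℝ)) /
    (((m : ℝ) - (i : ℝ)) * (Nat.factorial i : ℝ) * Real.Gamma (1 + (i : ℝ) / (m : ℝ)))

/-- `T(s) = ∫₀^s ((e^t - 1)/t)·((t/m)/(1 - e^{-t/m}) - 1) dt`, integrand extended by `0` at `t = 0`. -/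
def Tfun (m : ℕ) (s : ℝ) : ℝ :=
  ∫ t in (0:ℝ)..s,
    if t = 0 then 0 else
      ((Real.exp t - 1) / t) * ((t / (m : ℝ)) / (1 - Real.exp (-t / (m : ℝ))) - 1)

end

/-!
Write `z F_q'(z) / F_q(z) = ∑ a_k (z/q)^k` and `log F_q(z) = ∑ a_k (z/q)^k / k`, where `a_k` is the
sum of `deg P` over the `P` in the product with `deg P ∣ k`. Sorting the elements of `𝔽_{q^k}` by
their minimal polynomials gives `a_k = q^k` for `1 ≤ k ≤ m`, so the exponential factor of `G_q`
cancels exactly these terms and `log G_q(x) = ∑_{k > m} a_k (x/q)^k / k`. For `k > m` only proper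
divisors of `k` count, so `a_k ≤ q^{k/2+1}`; moreover `a_k ≤ q^{m+1}` always. For `√q < x < q` these
two bounds, used up to and beyond `k = 2m`, show that `∑_{k > m} a_k (x/q)^k` is at most a constant
times `(x²/q)^m`, which up to a constant is the term `k = 2m` alone. Hence
`log G_q(x) ≍ (x²/q)^m / m`, while `x F_q'(x) / F_q(x) ≍ x^m`, so the saddle point equation gives
`x_q^m ≍ n` and `log G_q(x_q) ≍ n² / (m q^m)`.

The constants are uniform for `x` in a compact subset of `(√q, q)`, and the range of `m` keeps `x_q`
in one. Since `x_q^m ≤ n`, the lower bound on `m` gives `x_q ≤ q^{1/(1+ε)}`. If `x_q` were below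
`q^β`, with `β > 1/2` and `β (2-ε) < 1`, then by monotonicity `n` would be `O(q^{βm})`, hence
`O(n^{β(2-ε)})`, which fails for large `n`.
-/

open Polynomial in
theorem finite_setOf_natDegree_le (R : Type*) [Semiring R] [Finite R] (m : ℕ) :
    {p : R[X] | p.natDegree ≤ m}.Finite := by
  have : Finite (degreeLT R (m + 1)) := .of_equiv _ (degreeLTEquiv R (m + 1)).symm.toEquiv
  refine (Set.toFinite (degreeLT R (m + 1) : Set R[X])).subset fun p hp ↦ mem_degreeLT.2 ?_
  exact degree_le_natDegree.trans_lt (by exact_mod_cast Nat.lt_succ_of_le hp)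

theorem hasSum_ite_dvd {d : ℕ} (hd : d ≠ 0) {f : ℕ → ℝ} {s : ℝ}
    (h : HasSum (fun k ↦ f (d * k)) s) : HasSum (fun n ↦ if d ∣ n then f n else 0) s := by
  have hinj : Function.Injective (d * ·) := mul_right_injective₀ hd
  rw [← hinj.hasSum_iff]
  · simpa [Function.comp_def] using h
  · intro n hn
    exact if_neg fun ⟨k, hk⟩ ↦ hn ⟨k, hk.symm⟩

theorem hasSum_pow_div_neg_log {r : ℝ} (h0 : 0 ≤ r) (h1 : r < 1) :
    HasSum (fun k : ℕ ↦ r ^ k / k) (-log (1 - r)) := by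
  rw [← hasSum_nat_add_iff' 1]
  simpa using hasSum_pow_div_log_of_abs_lt_one (abs_lt.2 ⟨by linarith, h1⟩)

theorem div_mem_Ico_zero_one {a x : ℝ} (hx : x ∈ Set.Ico 0 a) : x / a ∈ Set.Ico (0 : ℝ) 1 :=
  ⟨div_nonneg hx.1 (hx.1.trans hx.2.le), (div_lt_one (hx.1.trans_lt hx.2)).2 hx.2⟩

theorem geom_sum_le_pow_div {w : ℝ} (hw : 1 < w) (n : ℕ) :
    ∑ i ∈ Finset.range n, w ^ i ≤ w ^ n / (w - 1) := by
  have : 0 < w - 1 := sub_pos.2 hw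
  rw [geom_sum_eq hw.ne']
  gcongr
  linarith

theorem hasDerivAt_inv_one_sub_div_pow {a x : ℝ} {d : ℕ} (h : (x / a) ^ d ≠ 1) :
    HasDerivAt (fun z : ℝ ↦ (1 - (z / a) ^ d)⁻¹)
      (d * (x / a) ^ (d - 1) * (1 / a) / (1 - (x / a) ^ d) ^ 2) x := by
  have := (((hasDerivAt_id x).div_const a).fun_pow d).const_sub 1
  simpa using this.fun_inv (sub_ne_zero.2 h.symm)

theorem mul_logDeriv_inv_one_sub_div_pow {a x : ℝ} {d : ℕ} (h : (x / a) ^ d ≠ 1) :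
    x * logDeriv (fun z : ℝ ↦ (1 - (z / a) ^ d)⁻¹) x = d / (1 - (x / a) ^ d) - d := by
  have h' : 1 - (x / a) ^ d ≠ 0 := sub_ne_zero.2 h.symm
  have hpow : (d : ℝ) * ((x / a) ^ (d - 1) * (x / a)) = d * (x / a) ^ d := by
    rcases d with _ | d <;> simp [pow_succ]
  calc x * logDeriv (fun z : ℝ ↦ (1 - (z / a) ^ d)⁻¹) x
      = d * ((x / a) ^ (d - 1) * (x / a)) / (1 - (x / a) ^ d) := by
        rw [logDeriv_apply, (hasDerivAt_inv_one_sub_div_pow h).deriv, div_inv_eq_mul]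
        field_simp
    _ = d / (1 - (x / a) ^ d) - d := by
        rw [hpow, eq_sub_iff_add_eq, div_add' _ _ _ h']
        ring

section DegreeSums

open Polynomial Module

open scoped Classical in
theorem card_filter_minpoly_eq {F K : Type*} [Field F] [Finite F] [Field K] [Fintype K]
    [Algebra F K] {p : F[X]} (hmonic : p.Monic) (hirr : Irreducible p)
    (hdvd : p.natDegree ∣ finrank F K) :
    Finset.card {a : K | minpoly F a = p} = p.natDegree := by
  have hsplits : (p.map (algebraMap F K)).Splits := by
    have hp := Polynomial.map_dvd (algebraMap F K)
      (hirr.natDegree_dvd_iff_dvd_X_pow_card_pow_sub_X.1 hdvd)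
    rw [← Module.natCard_eq_pow_finrank (K := F) (V := K), Nat.card_eq_fintype_card] at hp
    refine .of_dvd ?_ ?_ hp
    · exact IsSplittingField.splits K _
    · exact map_ne_zero (FiniteField.X_pow_card_sub_X_ne_zero F Fintype.one_lt_card)
  have hsep : p.Separable := PerfectField.separable_of_irreducible hirr
  rw [← card_rootSet_eq_natDegree hsep hsplits, ← Set.toFinset_card]
  congr 1
  ext a
  simp only [Finset.mem_filter, Finset.mem_univ, true_and, Set.mem_toFinset,
    mem_rootSet_of_ne hmonic.ne_zero]
  refine ⟨?_, fun ha ↦ (minpoly.eq_of_irreducible_of_monic hirr ha hmonic).symm⟩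
  rintro rfl
  exact minpoly.aeval F a

variable (F : Type*) [Field F] [Fintype F]

/-- The monic irreducible polynomials of degree at most `m`: the index set of the product
`FqFun F m`. -/
noncomputable def monicIrredLE (m : ℕ) : Finset F[X] :=
  ((finite_setOf_natDegree_le F m).subset fun _ (hp : _ ∧ Irreducible _ ∧ _) ↦ hp.2.2 :
    {p : F[X] | p.Monic ∧ Irreducible p ∧ p.natDegree ≤ m}.Finite).toFinset

/-- The sum of the degrees of the monic irreducible polynomials `P` with `deg P ≤ m` and
`deg P ∣ k`. For `k ≥ 1` this is the coefficient of `(z/q)^k` in the power series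
`z F_q'(z) / F_q(z)`. -/
noncomputable def degSum (m k : ℕ) : ℕ :=
  ∑ p ∈ monicIrredLE F m with p.natDegree ∣ k, p.natDegree

variable {F} {m k : ℕ}

theorem mem_monicIrredLE {p : F[X]} :
    p ∈ monicIrredLE F m ↔ p.Monic ∧ Irreducible p ∧ p.natDegree ≤ m := by
  simp [monicIrredLE]

theorem natDegree_pos_of_mem_monicIrredLE {p : F[X]} (hp : p ∈ monicIrredLE F m) :
    0 < p.natDegree :=
  (mem_monicIrredLE.1 hp).2.1.natDegree_pos

theorem degSum_finrank {K : Type*} [Field K] [Fintype K] [Algebra F K] (hm : finrank F K ≤ m) :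
    degSum F m (finrank F K) = Fintype.card K := by
  classical
  have hminpoly : ∀ a ∈ (Finset.univ : Finset K),
      minpoly F a ∈ (monicIrredLE F m).filter (·.natDegree ∣ finrank F K) := by
    intro a _
    have ha : IsIntegral F a := Algebra.IsIntegral.isIntegral a
    have hdvd : (minpoly F a).natDegree ∣ finrank F K := minpoly.degree_dvd ha
    rw [Finset.mem_filter, mem_monicIrredLE]
    exact ⟨⟨minpoly.monic ha, minpoly.irreducible ha, (Nat.le_of_dvd finrank_pos hdvd).trans hm⟩,
      hdvd⟩
  rw [← Finset.card_univ, Finset.card_eq_sum_card_fiberwise hminpoly]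
  refine Finset.sum_congr rfl fun p hp ↦ ?_
  obtain ⟨hp, hdvd⟩ := Finset.mem_filter.1 hp
  obtain ⟨hmonic, hirr, -⟩ := mem_monicIrredLE.1 hp
  exact (card_filter_minpoly_eq hmonic hirr hdvd).symm

theorem degSum_eq_pow (hk : 1 ≤ k) (hkm : k ≤ m) : degSum F m k = Fintype.card F ^ k := by
  obtain ⟨ℓ, _⟩ := CharP.exists F
  have : Fact ℓ.Prime := ⟨CharP.char_is_prime F ℓ⟩
  have : NeZero k := ⟨by lia⟩
  have : Fintype (FiniteField.Extension F ℓ k) := .ofFinite _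
  have hfinrank : finrank F (FiniteField.Extension F ℓ k) = k :=
    FiniteField.finrank_extension F ℓ k
  rw [← hfinrank, ← card_eq_pow_finrank, degSum_finrank (hfinrank.trans_le hkm)]

theorem sum_natDegree_eq_le_pow {d : ℕ} (hd : 1 ≤ d) :
    ∑ p ∈ monicIrredLE F m with p.natDegree = d, p.natDegree ≤ Fintype.card F ^ d := by
  rw [← degSum_eq_pow hd le_rfl, degSum]
  refine Finset.sum_le_sum_of_subset fun p hp ↦ ?_
  simp only [Finset.mem_filter, mem_monicIrredLE] at hp ⊢
  exact ⟨⟨hp.1.1, hp.1.2.1, hp.2.le⟩, hp.2.dvd⟩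

theorem degSum_le_pow_of_forall_dvd {D : ℕ} (h : ∀ d, d ∣ k → d ≤ m → d < D) :
    degSum F m k ≤ Fintype.card F ^ D := by
  have hmaps : ∀ p ∈ (monicIrredLE F m).filter (·.natDegree ∣ k),
      p.natDegree ∈ Finset.Ico 1 D := by
    intro p hp
    obtain ⟨hp, hdvd⟩ := Finset.mem_filter.1 hp
    exact Finset.mem_Ico.2 ⟨natDegree_pos_of_mem_monicIrredLE hp,
      h _ hdvd (mem_monicIrredLE.1 hp).2.2⟩
  calc degSum F m k
      = ∑ d ∈ Finset.Ico 1 D, ∑ p ∈ ((monicIrredLE F m).filter (·.natDegree ∣ k)) with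
          p.natDegree = d, p.natDegree := (Finset.sum_fiberwise_of_maps_to hmaps _).symm
    _ ≤ ∑ d ∈ Finset.Ico 1 D, Fintype.card F ^ d := by
        refine Finset.sum_le_sum fun d hd ↦
          le_trans ?_ (sum_natDegree_eq_le_pow (m := m) (Finset.mem_Ico.1 hd).1)
        exact Finset.sum_le_sum_of_subset
          (Finset.filter_subset_filter _ (Finset.filter_subset _ _))
    _ ≤ Fintype.card F ^ D :=
        (Nat.geomSum_lt Fintype.one_lt_card fun _ hd ↦ (Finset.mem_Ico.1 hd).2).le

theorem degSum_le_pow_succ : degSum F m k ≤ Fintype.card F ^ (m + 1) :=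
  degSum_le_pow_of_forall_dvd fun _ _ hd ↦ Nat.lt_succ_of_le hd

theorem degSum_le_pow_half_succ (hmk : m < k) : degSum F m k ≤ Fintype.card F ^ (k / 2 + 1) := by
  refine degSum_le_pow_of_forall_dvd fun d ⟨c, hc⟩ hdm ↦ ?_
  have hc2 : 2 ≤ c := by
    by_contra! hlt
    interval_cases c <;> lia
  rw [Nat.lt_succ_iff, Nat.le_div_iff_mul_le two_pos, hc]
  exact Nat.mul_le_mul_left d hc2

theorem pow_le_degSum_two_mul (hm : 1 ≤ m) : Fintype.card F ^ m ≤ degSum F m (2 * m) := by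
  rw [← degSum_eq_pow hm le_rfl]
  refine Finset.sum_le_sum_of_subset (Finset.monotone_filter_right _ ?_)
  exact fun p _ hp ↦ hp.mul_left 2

end DegreeSums

section SaddleSeries

variable (F : Type) [Field F] [Fintype F]

local notation "q" => (Fintype.card F : ℝ)

/-- The terms of degree greater than `m` of the power series `z F_q'(z) / F_q(z)`, evaluated at
`x`; these are the terms that make up `z G_q'(z) / G_q(z)`. -/
noncomputable def degSumTail (m : ℕ) (x : ℝ) : ℝ :=
  ∑' j : ℕ, degSum F m (j + (m + 1)) * (x / q) ^ (j + (m + 1))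

variable {F} {m : ℕ} {x : ℝ}

theorem one_lt_card_cast : 1 < q := by
  exact_mod_cast (Fintype.one_lt_card : 1 < Fintype.card F)

theorem FqFun_eq_prod (m : ℕ) :
    FqFun F m = fun z ↦ ∏ p ∈ monicIrredLE F m, (1 - (z / q) ^ p.natDegree)⁻¹ := by
  ext z
  rw [FqFun]
  exact finprod_mem_eq_finite_toFinset_prod _ _

theorem div_card_pow_natDegree_lt_one (hx : x ∈ Set.Ico 0 q) {p : Polynomial F}
    (hp : p ∈ monicIrredLE F m) : (x / q) ^ p.natDegree < 1 :=
  pow_lt_one₀ (div_mem_Ico_zero_one hx).1 (div_mem_Ico_zero_one hx).2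
    (natDegree_pos_of_mem_monicIrredLE hp).ne'

theorem FqFun_pos (hx : x ∈ Set.Ico 0 q) : 0 < FqFun F m x := by
  rw [FqFun_eq_prod]
  exact Finset.prod_pos fun p hp ↦ inv_pos.2 (sub_pos.2 (div_card_pow_natDegree_lt_one hx hp))

theorem hasSum_degSum_mul {f : ℕ → ℝ} {s : Polynomial F → ℝ}
    (h : ∀ p ∈ monicIrredLE F m, HasSum (fun k ↦ f (p.natDegree * k)) (s p)) :
    HasSum (fun k ↦ degSum F m k * f k) (∑ p ∈ monicIrredLE F m, p.natDegree * s p) := by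
  have hterm (k : ℕ) : (degSum F m k : ℝ) * f k =
      ∑ p ∈ monicIrredLE F m, p.natDegree * if p.natDegree ∣ k then f k else 0 := by
    rw [degSum, Nat.cast_sum, Finset.sum_mul, Finset.sum_filter]
    exact Finset.sum_congr rfl fun p _ ↦ by split_ifs <;> simp
  simp_rw [hterm]
  refine hasSum_sum fun p hp ↦ (hasSum_ite_dvd ?_ (h p hp)).mul_left _
  exact (natDegree_pos_of_mem_monicIrredLE hp).ne'

theorem hasSum_log_FqFun (hx : x ∈ Set.Ico 0 q) :
    HasSum (fun k : ℕ ↦ degSum F m k * ((x / q) ^ k / k)) (log (FqFun F m x)) := by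
  convert! hasSum_degSum_mul (f := fun k ↦ (x / q) ^ k / k)
    (s := fun p ↦ -log (1 - (x / q) ^ p.natDegree) / p.natDegree) fun p hp ↦ ?_
  · rw [FqFun_eq_prod, log_prod fun p hp ↦
      (inv_pos.2 (sub_pos.2 (div_card_pow_natDegree_lt_one hx hp))).ne']
    refine Finset.sum_congr rfl fun p hp ↦ ?_
    have := (natDegree_pos_of_mem_monicIrredLE hp).ne'
    rw [log_inv]
    field_simp
  · have := (hasSum_pow_div_neg_log (pow_nonneg (div_mem_Ico_zero_one hx).1 _)
      (div_card_pow_natDegree_lt_one hx hp)).div_const (p.natDegree : ℝ)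
    convert! this using 2 with k
    rw [pow_mul, Nat.cast_mul, div_div, mul_comm (p.natDegree : ℝ)]

theorem mul_logDeriv_FqFun_eq_sum (hx : x ∈ Set.Ico 0 q) :
    x * logDeriv (FqFun F m) x =
      ∑ p ∈ monicIrredLE F m, (p.natDegree / (1 - (x / q) ^ p.natDegree) - p.natDegree) := by
  have hne {p} (hp : p ∈ monicIrredLE F m) := (div_card_pow_natDegree_lt_one hx hp).ne
  rw [FqFun_eq_prod, logDeriv_prod, Finset.mul_sum]
  · exact Finset.sum_congr rfl fun p hp ↦ mul_logDeriv_inv_one_sub_div_pow (hne hp)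
  · exact fun p hp ↦ inv_ne_zero (sub_ne_zero.2 (hne hp).symm)
  · exact fun p hp ↦ (hasDerivAt_inv_one_sub_div_pow (hne hp)).differentiableAt

-- The term `k = 0` on the left is `degSum F m 0`, as every degree divides `0`.
theorem hasSum_degSum_mul_pow (hx : x ∈ Set.Ico 0 q) :
    HasSum (fun k ↦ degSum F m k * (x / q) ^ k)
      (x * logDeriv (FqFun F m) x + degSum F m 0) := by
  convert! hasSum_degSum_mul (f := fun k ↦ (x / q) ^ k)
    (s := fun p ↦ (1 - (x / q) ^ p.natDegree)⁻¹) fun p hp ↦ ?_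
  · rw [mul_logDeriv_FqFun_eq_sum hx, degSum]
    simp [div_eq_mul_inv]
  · simp_rw [pow_mul]
    exact hasSum_geometric_of_lt_one (pow_nonneg (div_mem_Ico_zero_one hx).1 _)
      (div_card_pow_natDegree_lt_one hx hp)

theorem degSum_mul_div_card_pow {k : ℕ} (hk : k ∈ Finset.Icc 1 m) :
    degSum F m k * (x / q) ^ k = x ^ k := by
  have : q ≠ 0 := by positivity
  rw [Finset.mem_Icc] at hk
  rw [degSum_eq_pow hk.1 hk.2, Nat.cast_pow, ← mul_pow, mul_div_cancel₀ x this]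

theorem summable_degSum_mul_pow (hx : x ∈ Set.Ico 0 q) :
    Summable fun j : ℕ ↦ degSum F m (j + (m + 1)) * (x / q) ^ (j + (m + 1)) :=
  (hasSum_degSum_mul_pow (m := m) hx).summable.comp_injective (add_left_injective (m + 1))

theorem mul_logDeriv_FqFun_eq_add_degSumTail (hx : x ∈ Set.Ico 0 q) :
    x * logDeriv (FqFun F m) x = ∑ k ∈ Finset.Icc 1 m, x ^ k + degSumTail F m x := by
  have h := (hasSum_degSum_mul_pow (m := m) hx).summable.sum_add_tsum_nat_add (m + 1)
  rw [(hasSum_degSum_mul_pow hx).tsum_eq, Finset.sum_range_eq_add_Ico _ (Nat.add_one_pos m),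
    Finset.Ico_add_one_right_eq_Icc,
    Finset.sum_congr rfl fun k hk ↦ degSum_mul_div_card_pow hk] at h
  rw [degSumTail]
  linarith [pow_zero (x / q)]

theorem hasSum_log_Gq (hx : x ∈ Set.Ico 0 q) :
    HasSum (fun j : ℕ ↦ degSum F m (j + (m + 1)) *
      ((x / q) ^ (j + (m + 1)) / (j + (m + 1) : ℕ))) (log (Gq F m x)) := by
  have hlog : log (Gq F m x) = log (FqFun F m x) - ∑ k ∈ Finset.Icc 1 m, x ^ k / k := by
    rw [Gq, log_mul (FqFun_pos hx).ne' (exp_ne_zero _), log_exp, sub_eq_add_neg]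
  convert! (hasSum_nat_add_iff' (m + 1)).2 (hasSum_log_FqFun hx) using 1
  rw [hlog, Finset.sum_range_eq_add_Ico _ (Nat.add_one_pos m), Finset.Ico_add_one_right_eq_Icc,
    Nat.cast_zero, div_zero, mul_zero, zero_add]
  congr 1
  refine Finset.sum_congr rfl fun k hk ↦ ?_
  rw [← degSum_mul_div_card_pow (F := F) hk, mul_div_assoc]

theorem degSumTail_nonneg (hx : 0 ≤ x) : 0 ≤ degSumTail F m x :=
  tsum_nonneg fun _ ↦ by positivity

theorem pow_le_mul_logDeriv_FqFun (hx : x ∈ Set.Ico 0 q) (hm : 1 ≤ m) :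
    x ^ m ≤ x * logDeriv (FqFun F m) x := by
  rw [mul_logDeriv_FqFun_eq_add_degSumTail hx]
  refine le_add_of_le_of_nonneg ?_ (degSumTail_nonneg hx.1)
  exact Finset.single_le_sum (fun k _ ↦ pow_nonneg hx.1 k) (Finset.mem_Icc.2 ⟨hm, le_rfl⟩)

variable (F m) in
theorem monotoneOn_mul_logDeriv_FqFun :
    MonotoneOn (fun x ↦ x * logDeriv (FqFun F m) x) (Set.Ico 0 q) := by
  intro x hx y hy hxy
  have hx0 := hx.1
  refine le_of_add_le_add_right (hasSum_le (fun k ↦ ?_) (hasSum_degSum_mul_pow hx)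
    (hasSum_degSum_mul_pow hy))
  gcongr

theorem log_Gq_le_degSumTail_div (hx : x ∈ Set.Ico 0 q) (hm : 1 ≤ m) :
    log (Gq F m x) ≤ degSumTail F m x / m := by
  have hx0 := hx.1
  refine hasSum_le (fun j ↦ ?_) (hasSum_log_Gq hx)
    ((summable_degSum_mul_pow hx).hasSum.div_const (m : ℝ))
  rw [← mul_div_assoc]
  gcongr
  lia

theorem le_log_Gq (hx : x ∈ Set.Ico 0 q) (hm : 1 ≤ m) :
    (x ^ 2 / q) ^ m / (2 * m) ≤ log (Gq F m x) := by
  have hx0 := hx.1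
  have hterm := le_hasSum (hasSum_log_Gq hx) (m - 1) fun j _ ↦ by positivity
  have hq : q ≠ 0 := by positivity
  rw [show m - 1 + (m + 1) = 2 * m by lia] at hterm
  calc (x ^ 2 / q) ^ m / (2 * m)
      = q ^ m * ((x / q) ^ (2 * m) / (2 * m : ℕ)) := by
        rw [pow_mul, Nat.cast_mul, Nat.cast_two, ← mul_div_assoc, ← mul_pow]
        congr 2
        field_simp
    _ ≤ degSum F m (2 * m) * ((x / q) ^ (2 * m) / (2 * m : ℕ)) := by
        gcongr
        exact_mod_cast pow_le_degSum_two_mul hm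
    _ ≤ log (Gq F m x) := hterm

end SaddleSeries

section SaddleBounds

/-- A constant `c` for which the part of `z F_q'(z) / F_q(z)` of degree greater than `m` is at most
`c (x²/q)^m` at a point `x` between `√q` and `q`, uniformly in `m`; the two summands account for
the degrees up to `2m` and beyond `2m`. -/
noncomputable def tailConst (q x : ℝ) : ℝ := q * (x / (x - √q) + q / (q - x))

theorem tailConst_pos {q x : ℝ} (hx : x ∈ Set.Ioo (√q) q) : 0 < tailConst q x := by
  have hx0 : 0 < x := (sqrt_nonneg q).trans_lt hx.1
  have hq0 : 0 < q := hx0.trans hx.2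
  have h1 : 0 < x - √q := sub_pos.2 hx.1
  have h2 : 0 < q - x := sub_pos.2 hx.2
  unfold tailConst
  positivity

theorem mem_Ico_of_mem_Ioo_sqrt {a x : ℝ} (hx : x ∈ Set.Ioo (√a) a) : x ∈ Set.Ico 0 a :=
  ⟨(sqrt_nonneg a).trans hx.1.le, hx.2⟩

theorem div_sqrt_pow_two_mul {q : ℝ} (hq : 0 ≤ q) (x : ℝ) (m : ℕ) :
    (x / √q) ^ (2 * m) = (x ^ 2 / q) ^ m := by
  rw [pow_mul, div_pow, sq_sqrt hq]

variable {F : Type} [Field F] [Fintype F] {m : ℕ} {x : ℝ}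

local notation "q" => (Fintype.card F : ℝ)

theorem degSum_mul_pow_le_sqrt {k : ℕ} (hmk : m < k) (hx : 0 ≤ x) :
    degSum F m k * (x / q) ^ k ≤ q * (x / √q) ^ k := by
  have hq : 1 < q := one_lt_card_cast
  have hdeg : (degSum F m k : ℝ) ≤ q * √q ^ k := by
    calc (degSum F m k : ℝ) ≤ q ^ (k / 2 + 1) := by exact_mod_cast degSum_le_pow_half_succ hmk
      _ = q * √q ^ (2 * (k / 2)) := by rw [pow_mul, sq_sqrt (by positivity), pow_succ']
      _ ≤ q * √q ^ k := by
        gcongr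
        · exact one_le_sqrt.2 hq.le
        · exact Nat.mul_div_le k 2
  calc degSum F m k * (x / q) ^ k ≤ q * √q ^ k * (x / q) ^ k := by gcongr
    _ = q * (x / √q) ^ k := by
      rw [mul_assoc, ← mul_pow, mul_div_left_comm, sqrt_div_self', mul_one_div]

theorem sum_degSum_mul_pow_le (hx : x ∈ Set.Ioo (√q) q) :
    ∑ j ∈ Finset.range m, degSum F m (j + (m + 1)) * (x / q) ^ (j + (m + 1)) ≤
      q * (x / (x - √q)) * (x ^ 2 / q) ^ m := by
  have hx0 : 0 ≤ x := (mem_Ico_of_mem_Ioo_sqrt hx).1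
  have hq : 1 < q := one_lt_card_cast
  have hsqrt : 0 < √q := sqrt_pos.2 (by linarith)
  set w := x / √q with hw
  have hw1 : 1 < w := (one_lt_div hsqrt).2 hx.1
  have hxw : x / (x - √q) = w / (w - 1) := by rw [hw]; field_simp
  calc ∑ j ∈ Finset.range m, degSum F m (j + (m + 1)) * (x / q) ^ (j + (m + 1))
      ≤ ∑ j ∈ Finset.range m, q * w ^ (m + 1) * w ^ j := by
        refine Finset.sum_le_sum fun j _ ↦ (degSum_mul_pow_le_sqrt (by lia) hx0).trans_eq ?_
        rw [pow_add, mul_assoc, mul_comm (w ^ j)]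
    _ ≤ q * w ^ (m + 1) * (w ^ m / (w - 1)) := by
        rw [← Finset.mul_sum]
        gcongr
        exact geom_sum_le_pow_div hw1 m
    _ = q * (x / (x - √q)) * (x ^ 2 / q) ^ m := by
        rw [hxw, ← div_sqrt_pow_two_mul (by positivity), ← hw]
        ring

theorem tsum_degSum_mul_pow_le (hx : x ∈ Set.Ico 0 q) :
    ∑' j : ℕ, degSum F m (j + m + (m + 1)) * (x / q) ^ (j + m + (m + 1)) ≤
      q * (q / (q - x)) * (x ^ 2 / q) ^ m := by
  obtain ⟨ht0, ht1⟩ := div_mem_Ico_zero_one hx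
  have hq : q ≠ 0 := by positivity
  have hsum := (summable_nat_add_iff m).2 (summable_degSum_mul_pow (F := F) (m := m) hx)
  have hgeom := (hasSum_geometric_of_lt_one ht0 ht1).mul_left (q * (x ^ 2 / q) ^ m)
  have hpow : (x ^ 2 / q) ^ m = q ^ m * (x / q) ^ (2 * m) := by
    rw [pow_mul, ← mul_pow]
    congr 1
    field_simp
  calc ∑' j : ℕ, degSum F m (j + m + (m + 1)) * (x / q) ^ (j + m + (m + 1))
      ≤ q * (x ^ 2 / q) ^ m * (1 - x / q)⁻¹ := by
        refine hasSum_le (fun j ↦ ?_) hsum.hasSum hgeom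
        calc degSum F m (j + m + (m + 1)) * (x / q) ^ (j + m + (m + 1))
            ≤ q ^ (m + 1) * (x / q) ^ (2 * m + j) := by
              gcongr ?_ * ?_
              · exact_mod_cast degSum_le_pow_succ
              · exact pow_le_pow_of_le_one ht0 ht1.le (by lia)
          _ = q * (x ^ 2 / q) ^ m * (x / q) ^ j := by rw [hpow]; ring
    _ = q * (q / (q - x)) * (x ^ 2 / q) ^ m := by
        rw [one_sub_div hq, inv_div]
        ring

theorem degSumTail_le (hx : x ∈ Set.Ioo (√q) q) :
    degSumTail F m x ≤ tailConst q x * (x ^ 2 / q) ^ m := by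
  have hx' := mem_Ico_of_mem_Ioo_sqrt hx
  rw [degSumTail, ← (summable_degSum_mul_pow hx').sum_add_tsum_nat_add m, tailConst, mul_add,
    add_mul]
  exact add_le_add (sum_degSum_mul_pow_le hx) (tsum_degSum_mul_pow_le hx')

theorem mul_logDeriv_FqFun_le (hx : x ∈ Set.Ioo (√q) q) :
    x * logDeriv (FqFun F m) x ≤ (x / (x - 1) + tailConst q x) * x ^ m := by
  obtain ⟨hx0, hxq⟩ := mem_Ico_of_mem_Ioo_sqrt hx
  have hx1 : 1 < x := (one_le_sqrt.2 one_lt_card_cast.le).trans_lt hx.1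
  have hK := tailConst_pos hx
  have hgeom : ∑ k ∈ Finset.Icc 1 m, x ^ k ≤ x / (x - 1) * x ^ m := by
    calc ∑ k ∈ Finset.Icc 1 m, x ^ k ≤ ∑ k ∈ Finset.range (m + 1), x ^ k := by
          refine Finset.sum_le_sum_of_subset_of_nonneg (fun k hk ↦ ?_) fun _ _ _ ↦ by positivity
          exact Finset.mem_range_succ_iff.2 (Finset.mem_Icc.1 hk).2
      _ ≤ x ^ (m + 1) / (x - 1) := geom_sum_le_pow_div hx1 _
      _ = x / (x - 1) * x ^ m := by ring
  have hsq : x ^ 2 / q ≤ x := by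
    rw [div_le_iff₀ (hx0.trans_lt hxq), sq]
    gcongr
  rw [mul_logDeriv_FqFun_eq_add_degSumTail ⟨hx0, hxq⟩, add_mul]
  refine add_le_add hgeom ((degSumTail_le hx).trans ?_)
  gcongr

theorem exists_tailConst_bound {y z : ℝ} (hy : √q < y) (hz : z < q) :
    ∃ C : ℝ, 0 < C ∧ ∀ x ∈ Set.Icc y z, x / (x - 1) + tailConst q x ≤ C := by
  have hsqrt : 1 ≤ √q := one_le_sqrt.2 one_lt_card_cast.le
  have hcont : ContinuousOn (fun x ↦ x / (x - 1) + tailConst q x) (Set.Icc y z) := by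
    unfold tailConst
    fun_prop (disch := intro x hx; simp only [Set.mem_Icc] at hx; grind)
  obtain ⟨C, hC⟩ := isCompact_Icc.bddAbove_image hcont
  exact ⟨max C 1, by positivity,
    fun x hx ↦ (hC (Set.mem_image_of_mem _ hx)).trans (le_max_left C 1)⟩

variable (F) in
theorem exists_log_Gq_bounds {y z : ℝ} (hy : √q < y) (hz : z < q) :
    ∃ c C : ℝ, 0 < c ∧ 0 < C ∧ ∀ m : ℕ, 1 ≤ m → ∀ x ∈ Set.Icc y z,
      c * (x * logDeriv (FqFun F m) x) ^ 2 / (m * q ^ m) ≤ log (Gq F m x) ∧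
        log (Gq F m x) ≤ C * (x * logDeriv (FqFun F m) x) ^ 2 / (m * q ^ m) := by
  obtain ⟨C, hC, hbound⟩ := exists_tailConst_bound hy hz
  refine ⟨1 / (2 * C ^ 2), C, by positivity, hC, fun m hm x hxyz ↦ ?_⟩
  have hx : x ∈ Set.Ioo (√q) q := Set.Icc_subset_Ioo hy hz hxyz
  have hx' := mem_Ico_of_mem_Ioo_sqrt hx
  have hx1 : 1 < x := (one_le_sqrt.2 one_lt_card_cast.le).trans_lt hx.1
  have hsq : (x ^ 2 / q) ^ m = (x ^ m) ^ 2 / q ^ m := by rw [div_pow, pow_right_comm]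
  have hlower : x ^ m ≤ x * logDeriv (FqFun F m) x := pow_le_mul_logDeriv_FqFun hx' hm
  have hupper : x * logDeriv (FqFun F m) x ≤ C * x ^ m :=
    (mul_logDeriv_FqFun_le hx).trans (by gcongr; exact hbound x hxyz)
  have htail : tailConst q x ≤ C :=
    (le_add_of_nonneg_left (div_nonneg hx'.1 (sub_pos.2 hx1).le)).trans (hbound x hxyz)
  set ν := x * logDeriv (FqFun F m) x
  have hν : 0 ≤ ν := (pow_nonneg hx'.1 m).trans hlower
  constructor
  · calc 1 / (2 * C ^ 2) * ν ^ 2 / (m * q ^ m)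
        ≤ 1 / (2 * C ^ 2) * (C * x ^ m) ^ 2 / (m * q ^ m) := by gcongr
      _ = (x ^ 2 / q) ^ m / (2 * m) := by rw [hsq]; field_simp
      _ ≤ log (Gq F m x) := le_log_Gq hx' hm
  · calc log (Gq F m x) ≤ degSumTail F m x / m := log_Gq_le_degSumTail_div hx' hm
      _ ≤ tailConst q x * (x ^ 2 / q) ^ m / m := by gcongr; exact degSumTail_le hx
      _ ≤ C * (ν ^ 2 / q ^ m) / m := by rw [hsq]; gcongr
      _ = C * ν ^ 2 / (m * q ^ m) := by field_simp

end SaddleBounds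

section SaddlePoint

theorem le_rpow_inv_of_pow_le {a n r x : ℝ} {m : ℕ} (hr : 1 < r) (ha : 0 < a) (hx : 0 < x)
    (hm : 1 ≤ m) (hxn : x ^ m ≤ n) (hnm : a * log n / log r ≤ m) : x ≤ r ^ a⁻¹ := by
  have hr0 : 0 < r := zero_lt_one.trans hr
  have hlog : m * log x ≤ log n := by
    rw [← log_pow]
    exact log_le_log (by positivity) hxn
  rw [div_le_iff₀ (log_pos hr), ← le_inv_mul_iff₀ ha] at hnm
  rw [le_rpow_iff_log_le hx hr0]
  refine le_of_mul_le_mul_left ?_ (Nat.cast_pos.2 hm : (0 : ℝ) < m)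
  linarith [mul_left_comm (m : ℝ) a⁻¹ (log r)]

theorem rpow_pow_le_rpow {b n r β : ℝ} {m : ℕ} (hr : 1 < r) (hn : 0 < n) (hβ : 0 ≤ β)
    (hmn : m ≤ b * log n / log r) : (r ^ β) ^ m ≤ n ^ (β * b) := by
  have hr0 : 0 < r := zero_lt_one.trans hr
  rw [le_div_iff₀ (log_pos hr)] at hmn
  rw [le_rpow_iff_log_le (by positivity) hn, log_pow, log_rpow hr0, mul_left_comm, mul_assoc]
  gcongr

theorem sqrt_lt_rpow {r β : ℝ} (hr : 1 < r) (hβ : 1 / 2 < β) : √r < r ^ β := by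
  rw [sqrt_eq_rpow]
  exact rpow_lt_rpow_of_exponent_lt hr hβ

theorem eventually_mul_rpow_lt {s : ℝ} (hs : s < 1) (C : ℝ) :
    ∀ᶠ n : ℝ in Filter.atTop, C * n ^ s < n := by
  filter_upwards [(tendsto_rpow_atTop (sub_pos.2 hs)).eventually_gt_atTop C,
    Filter.eventually_gt_atTop 0] with n hC hn
  calc C * n ^ s < n ^ (1 - s) * n ^ s := by gcongr
    _ = n := by rw [← rpow_add hn, sub_add_cancel, rpow_one]

variable (F : Type) [Field F] [Fintype F]

local notation "q" => (Fintype.card F : ℝ)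

theorem eventually_rpow_le_of_mul_logDeriv_eq {b β : ℝ} (hβ : 1 / 2 < β) (hβ1 : β < 1)
    (hβb : β * b < 1) :
    ∀ᶠ n : ℝ in Filter.atTop, ∀ m : ℕ, m ≤ b * log n / log q →
      ∀ x ∈ Set.Ico 0 q, x * logDeriv (FqFun F m) x = n → q ^ β ≤ x := by
  have hq : 1 < q := one_lt_card_cast
  have hy : q ^ β ∈ Set.Ioo (√q) q := ⟨sqrt_lt_rpow hq hβ, rpow_lt_self_of_one_lt hq hβ1⟩
  set y := q ^ β
  set C := y / (y - 1) + tailConst q y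
  have hC : 0 ≤ C := by
    have hy1 : 1 < y := one_lt_rpow hq (by linarith)
    have := tailConst_pos hy
    have := sub_pos.2 hy1
    positivity
  filter_upwards [eventually_mul_rpow_lt hβb C, Filter.eventually_gt_atTop 0]
    with n hCn hn m hmn x hx hxn
  by_contra! hxy
  refine hCn.not_ge ?_
  calc n = x * logDeriv (FqFun F m) x := hxn.symm
    _ ≤ y * logDeriv (FqFun F m) y :=
        monotoneOn_mul_logDeriv_FqFun F m hx (mem_Ico_of_mem_Ioo_sqrt hy) hxy.le
    _ ≤ C * y ^ m := mul_logDeriv_FqFun_le hy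
    _ ≤ C * n ^ (β * b) := by
        gcongr
        exact rpow_pow_le_rpow hq hn (by linarith) hmn

end SaddlePoint

theorem stmt14_general (F : Type) [Field F] [Fintype F] {a b : ℝ} (ha : 1 < a) (hb : b < 2) :
    ∃ c C : ℝ, 0 < c ∧ 0 < C ∧ ∀ᶠ n : ℝ in Filter.atTop, ∀ m : ℕ,
      a * log n / log (Fintype.card F) ≤ m → m ≤ b * log n / log (Fintype.card F) →
      ∀ x : ℝ, 0 < x → x < Fintype.card F → x * deriv (FqFun F m) x / FqFun F m x = n →
      c * n ^ 2 / (m * (Fintype.card F : ℝ) ^ m) ≤ log (Gq F m x) ∧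
        log (Gq F m x) ≤ C * n ^ 2 / (m * (Fintype.card F : ℝ) ^ m) := by
  have hq : (1 : ℝ) < Fintype.card F := one_lt_card_cast
  obtain ⟨β, hβ, hβ'⟩ : ∃ β, 1 / 2 < β ∧ β < 1 / max 1 b :=
    exists_between (one_div_lt_one_div_of_lt (by positivity) (max_lt one_lt_two hb))
  rw [lt_div_iff₀ (by positivity)] at hβ'
  have hβ1 : β < 1 := by nlinarith [le_max_left 1 b]
  have hβb : β * b < 1 := by nlinarith [le_max_right 1 b]
  have hz : (Fintype.card F : ℝ) ^ a⁻¹ < Fintype.card F :=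
    rpow_lt_self_of_one_lt hq (inv_lt_one_of_one_lt₀ ha)
  obtain ⟨c, C, hc, hC, hbounds⟩ := exists_log_Gq_bounds F (sqrt_lt_rpow hq hβ) hz
  refine ⟨c, C, hc, hC, ?_⟩
  filter_upwards [eventually_rpow_le_of_mul_logDeriv_eq F hβ hβ1 hβb,
    Filter.eventually_gt_atTop 1] with n hlower hn m ham hmb x hx0 hxq hxn
  have hx : x ∈ Set.Ico 0 (Fintype.card F : ℝ) := ⟨hx0.le, hxq⟩
  rw [mul_div_assoc, ← logDeriv_apply] at hxn
  have hm : 1 ≤ m := by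
    have := log_pos hn
    have := log_pos hq
    exact Nat.cast_pos.1 (lt_of_lt_of_le (by positivity) ham)
  have hxm : x ^ m ≤ n := hxn ▸ pow_le_mul_logDeriv_FqFun hx hm
  subst hxn
  exact hbounds m hm x ⟨hlower m hmb x hx rfl,
    le_rpow_inv_of_pow_le hq (by linarith) hx0 hm hxm ham⟩

/-- Fix a prime power `q` (the cardinality of a finite field `F`) and
`ε ∈ (0,1/2)`. There exist `c, C > 0` and `N` such that for all `n ≥ N` and
`(1+ε)·log_q n ≤ m ≤ (2−ε)·log_q n`, one has
`c·n²/(m·q^m) ≤ log G_q(x_q) ≤ C·n²/(m·q^m)`. -/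
theorem stmt14 :
    ∀ (F : Type) [Field F] [Fintype F], ∀ ε : ℝ, 0 < ε → ε < 1 / 2 →
      ∃ c C : ℝ, 0 < c ∧ 0 < C ∧ ∃ N : ℕ, ∀ n : ℕ, N ≤ n → ∀ m : ℕ,
      (1 + ε) * Real.log n / Real.log (Fintype.card F) ≤ (m : ℝ) →
      (m : ℝ) ≤ (2 - ε) * Real.log n / Real.log (Fintype.card F) →
      ∀ xq : ℝ, 0 < xq → xq < (Fintype.card F : ℝ) →
      xq * deriv (FqFun F m) xq / FqFun F m xq = (n : ℝ) →
      c * (n : ℝ) ^ 2 / ((m : ℝ) * (Fintype.card F : ℝ) ^ m) ≤ Real.log (Gq F m xq) ∧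
        Real.log (Gq F m xq) ≤ C * (n : ℝ) ^ 2 / ((m : ℝ) * (Fintype.card F : ℝ) ^ m) := by
  intro F _ _ ε hε _
  obtain ⟨c, C, hc, hC, h⟩ := stmt14_general F (a := 1 + ε) (b := 2 - ε) (by linarith) (by linarith)
  exact ⟨c, C, hc, hC, Filter.eventually_atTop.1 (tendsto_natCast_atTop_atTop.eventually h)⟩
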